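/- arXiv:2207.12490 — 3 statements merged into one kernel-verified Lean document; each statement's English description precedes it below -/
import Mathlib

section
/- Let f ∈ K̄[x] be a monic polynomial of degree ≥ 1 with multiset of roots R in K̄, and let α ∈ K̄ with f(α) ≠ 0. Set d₋ := max_{a ∈ R} v(a − α). Then for every rational b ≥ d₋ and every β ∈ K̄× with v(β) = b, the Gauss valuation of f(βz + α) equals Σ_{a ∈ R} v(a − α) (the sum taken with multiplicities). -/
open Polynomial

/-- The *Gauss valuation* of a polynomial: the minimum of the valuations of its
coefficients (with value `⊤ = +∞` for the zero polynomial). -/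
noncomputable def gaussVal {Kbar : Type*} [Field Kbar]
    (v : AddValuation Kbar (WithTop ℚ)) (h : Kbar[X]) : WithTop ℚ :=
  h.support.inf fun i => v (h.coeff i)

/-- `h = q² + ρ` is a *part-square decomposition* of `h`:
`deg q ≤ ⌈deg h / 2⌉`, encoded as `2 * deg q ≤ deg h + 1` (`q = 0` is allowed). -/
def IsPSD {Kbar : Type*} [Field Kbar] (h q ρ : Kbar[X]) : Prop :=
  h = q ^ 2 + ρ ∧ 2 * q.natDegree ≤ h.natDegree + 1

/-- A part-square decomposition `h = q² + ρ` is *good* if either `v ρ − v h ≥ 2 v 2`,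
or `v ρ − v h < 2 v 2` and no part-square decomposition of `h` has strictly larger
Gauss valuation of its remainder. -/
def IsGoodPSD {Kbar : Type*} [Field Kbar] (v : AddValuation Kbar (WithTop ℚ))
    (h q ρ : Kbar[X]) : Prop :=
  IsPSD h q ρ ∧
    (gaussVal v h + (v 2 + v 2) ≤ gaussVal v ρ ∨
      (gaussVal v ρ < gaussVal v h + (v 2 + v 2) ∧
        ∀ q' ρ' : Kbar[X], IsPSD h q' ρ' → gaussVal v ρ' ≤ gaussVal v ρ))

/-!
The constant term of `f(βz + α)` is `f(α)`, whose valuation is `∑ v(a − α)` up to the leading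
coefficient of `f`, so it suffices that no other coefficient has smaller valuation. This property
of a polynomial is preserved by products, and the hypothesis on `v β` says precisely that each
linear factor `βz + (α − a)` has it.
-/

section ConstDominant

variable {R Γ : Type*} [LinearOrderedAddCommMonoidWithTop Γ]

/-- The submonoid of *constant-dominant* polynomials: those whose constant coefficient has minimal
valuation among all coefficients. Bundling it as a submonoid provides closure under products over
a multiset of roots. -/
def constDominant [Ring R] (v : AddValuation R Γ) : Submonoid R[X] where
  carrier := {p | ∀ i, v (p.coeff 0) ≤ v (p.coeff i)}
  one_mem' i := by cases i <;> simp [coeff_one]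
  mul_mem' {p q} hp hq n := by
    rw [mul_coeff_zero, coeff_mul]
    refine v.map_le_sum fun ij _ => ?_
    rw [v.map_mul, v.map_mul]
    exact add_le_add (hp ij.1) (hq ij.2)

theorem C_mem_constDominant [Ring R] (v : AddValuation R Γ) (c : R) : C c ∈ constDominant v := by
  rintro (_ | i) <;> simp [coeff_C]

theorem C_mul_X_add_C_mem_constDominant [Ring R] {v : AddValuation R Γ} {b c : R}
    (h : v c ≤ v b) : C b * X + C c ∈ constDominant v := by
  rintro (_ | _ | i) <;> simp [coeff_X, coeff_C, h]

theorem addValuation_multiset_prod [CommRing R] (v : AddValuation R Γ) (s : Multiset R) :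
    v s.prod = (s.map v).sum := by
  induction s using Multiset.induction_on with
  | empty => simp
  | cons a s ih => simp [ih]

end ConstDominant

section Splits

variable {R Γ : Type*} [CommRing R] [IsDomain R] [LinearOrderedAddCommMonoidWithTop Γ]

theorem comp_C_mul_X_add_C_eq_prod_roots {f : R[X]} (hf : f.Splits) (α β : R) :
    f.comp (C β * X + C α) =
      C f.leadingCoeff * (f.roots.map fun a => C β * X + C (α - a)).prod := by
  conv_lhs => rw [hf.eq_prod_roots]
  simp [multiset_prod_comp, Multiset.map_map, add_sub_assoc]

theorem comp_C_mul_X_add_C_mem_constDominant {v : AddValuation R Γ} {f : R[X]} (hf : f.Splits)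
    {α β : R} (h : ∀ a ∈ f.roots, v (a - α) ≤ v β) :
    f.comp (C β * X + C α) ∈ constDominant v := by
  rw [comp_C_mul_X_add_C_eq_prod_roots hf]
  refine mul_mem (C_mem_constDominant v _) (multiset_prod_mem _ fun p hp => ?_)
  obtain ⟨a, ha, rfl⟩ := Multiset.mem_map.mp hp
  exact C_mul_X_add_C_mem_constDominant ((v.map_sub_swap α a).trans_le (h a ha))

theorem addValuation_eval_eq_sum_roots (v : AddValuation R Γ) {f : R[X]} (hf : f.Splits) (α : R) :
    v (f.eval α) = v f.leadingCoeff + (f.roots.map fun a => v (a - α)).sum := by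
  rw [hf.eval_eq_prod_roots, v.map_mul, addValuation_multiset_prod, Multiset.map_map]
  simp only [Function.comp_def, v.map_sub_swap α]

end Splits

section Field

variable {K : Type*} [Field K]

theorem gaussVal_le_coeff (v : AddValuation K (WithTop ℚ)) (p : K[X]) (i : ℕ) :
    gaussVal v p ≤ v (p.coeff i) := by
  by_cases hi : p.coeff i = 0
  · simp [hi]
  · exact Finset.inf_le (f := fun j => v (p.coeff j)) (mem_support_iff.mpr hi)

theorem gaussVal_eq_of_mem_constDominant {v : AddValuation K (WithTop ℚ)} {p : K[X]}
    (hp : p ∈ constDominant v) : gaussVal v p = v (p.coeff 0) :=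
  le_antisymm (gaussVal_le_coeff v p 0) (Finset.le_inf fun i _ => hp i)

theorem stmt15_general (v : AddValuation K (WithTop ℚ)) {f : K[X]} (hf : f.Splits) {α β : K}
    (h : ∀ a ∈ f.roots, v (a - α) ≤ v β) :
    gaussVal v (f.comp (C β * X + C α)) =
      v f.leadingCoeff + (f.roots.map fun a => v (a - α)).sum := by
  have constant_term : (f.comp (C β * X + C α)).coeff 0 = f.eval α := by
    simp [coeff_zero_eq_eval_zero, eval_comp]
  rw [gaussVal_eq_of_mem_constDominant (comp_C_mul_X_add_C_mem_constDominant hf h), constant_term,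
    addValuation_eval_eq_sum_roots v hf]

end Field

/-- Let `f` be monic of degree `≥ 1` with multiset of roots `R`, and
`α` not a root.  Then for every rational `b ≥ d₋ := max_{a ∈ R} v (a − α)` and every `β`
with `v β = b`, the Gauss valuation of `f(βz + α)` equals `∑_{a ∈ R} v (a − α)`. -/
theorem stmt15 {Kbar : Type*} [Field Kbar] [IsAlgClosed Kbar]
    (v : AddValuation Kbar (WithTop ℚ)) (hchar : (2 : Kbar) ≠ 0)
    (f : Kbar[X]) (hmonic : f.Monic) (hdeg : 1 ≤ f.natDegree)
    (α : Kbar) (hα : f.eval α ≠ 0)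
    (b : ℚ) (hb : ∀ a ∈ f.roots, v (a - α) ≤ (b : WithTop ℚ))
    (β : Kbar) (hβ : β ≠ 0) (hvβ : v β = (b : WithTop ℚ)) :
    gaussVal v (f.comp (C β * X + C α)) = (f.roots.map fun a => v (a - α)).sum := by
  simpa [hmonic.leadingCoeff] using
    stmt15_general v (IsAlgClosed.splits f) fun a ha => (hb a ha).trans_eq hvβ.symm
end

section
/- Let K be a field of characteristic different from 2, let f ∈ K[x], and let Ω be an algebraic closure of the rational function field K(T). Suppose q, ρ ∈ Ω[z] satisfy f(z + T) = q(z)² + ρ(z), where every nonzero term of ρ has odd degree (a totally odd part-square decomposition of f(z+T) over Ω). Then every coefficient of q and every coefficient of ρ, regarded as elements of Ω, is integral over the polynomial ring K[T]. -/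
open Polynomial

/-!
Write `q = ∑ qᵢ zⁱ`. The coefficient of `z²ᵐ` in `q² + ρ` expresses `qₘ²` as a base-ring element
minus a sum of products `qₐ q_b` with `a + b = 2m` and `a ≠ b`. Using this relation to rewrite
repeated factors pushes the indices of a monomial in the `qᵢ` apart, which must stop because the
indices are bounded by `deg q`. Hence the algebra generated by the `qᵢ` is spanned as a module by
the finitely many squarefree monomials, so it is integral.
-/

/-- The weight `∑ (i (n - i) + 1)` of a multiset of indices `i ≤ n`. Concavity of `i (n - i)`
makes it drop when two equal indices are spread apart symmetrically, and the summand `1` makes it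
drop when indices are removed; it is the termination measure of the rewriting argument. -/
def indexWeight (n : ℕ) (t : Multiset ℕ) : ℕ :=
  (t.map fun i ↦ i * (n - i) + 1).sum

theorem indexWeight_cons (n i : ℕ) (t : Multiset ℕ) :
    indexWeight n (i ::ₘ t) = i * (n - i) + 1 + indexWeight n t := by
  simp [indexWeight]

theorem indexWeight_lt_cons_cons (n i j : ℕ) (t : Multiset ℕ) :
    indexWeight n t < indexWeight n (i ::ₘ j ::ₘ t) := by
  simp only [indexWeight_cons]
  lia

theorem indexWeight_spread_lt {n m a b : ℕ} (ha : a ≤ n) (hb : b ≤ n) (hab : a + b = 2 * m)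
    (hne : a ≠ m) (t : Multiset ℕ) :
    indexWeight n (a ::ₘ b ::ₘ t) < indexWeight n (m ::ₘ m ::ₘ t) := by
  have hm : m ≤ n := by lia
  have concave : a * (n - a) + b * (n - b) < m * (n - m) + m * (n - m) := by
    have hsq : (0 : ℤ) < (a - m) ^ 2 := by
      have : (a : ℤ) - m ≠ 0 := by lia
      positivity
    have hb' : (b : ℤ) = 2 * m - a := by lia
    zify [ha, hb, hm]
    rw [hb']
    linarith
  simp only [indexWeight_cons]
  lia

section Span

variable {R S : Type*} [CommRing R] [CommRing S] [Algebra R S]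

variable (R) in
/-- The `R`-submodule spanned by the squarefree monomials in the coefficients of `q`. Only indices
in the support of `q` are allowed, so that there are finitely many generators. -/
def squarefreeCoeffSpan (q : S[X]) : Submodule R S :=
  Submodule.span R ((fun s : Finset ℕ ↦ ∏ i ∈ s, q.coeff i) '' q.support.powerset)

theorem squarefreeCoeffSpan_fg (q : S[X]) : (squarefreeCoeffSpan R q).FG :=
  Submodule.fg_span (q.support.powerset.finite_toSet.image _)

theorem squarefreeCoeffSpan_le_adjoin (q : S[X]) :
    squarefreeCoeffSpan R q ≤ (Algebra.adjoin R (Set.range q.coeff)).toSubmodule := by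
  refine Submodule.span_le.mpr ?_
  rintro _ ⟨s, -, rfl⟩
  exact Subalgebra.prod_mem _ fun i _ ↦ Algebra.subset_adjoin ⟨i, rfl⟩

theorem prod_map_coeff_mem_squarefreeCoeffSpan_of_nodup (q : S[X]) {t : Multiset ℕ}
    (ht : t.Nodup) : (t.map q.coeff).prod ∈ squarefreeCoeffSpan R q := by
  by_cases hsupp : ∀ i ∈ t, i ∈ q.support
  · exact Submodule.subset_span ⟨⟨t, ht⟩, Finset.mem_coe.mpr (Finset.mem_powerset.mpr hsupp), rfl⟩
  · push Not at hsupp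
    obtain ⟨i, hit, hi⟩ := hsupp
    rw [Multiset.prod_eq_zero (Multiset.mem_map.mpr ⟨i, hit, notMem_support_iff.mp hi⟩)]
    exact zero_mem _

theorem coeff_mul_coeff_self (q : S[X]) (m : ℕ) :
    q.coeff m * q.coeff m = (q ^ 2).coeff (2 * m) -
      ∑ x ∈ (Finset.HasAntidiagonal.antidiagonal (2 * m)).erase (m, m),
        q.coeff x.1 * q.coeff x.2 := by
  have hmem : (m, m) ∈ Finset.HasAntidiagonal.antidiagonal (2 * m) :=
    Finset.HasAntidiagonal.mem_antidiagonal.mpr (two_mul m).symm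
  rw [pow_two, coeff_mul, ← Finset.add_sum_erase _ _ hmem, add_sub_cancel_right]

theorem prod_map_coeff_cons_cons_self (q : S[X]) (m : ℕ) (t : Multiset ℕ) :
    ((m ::ₘ m ::ₘ t).map q.coeff).prod = (q ^ 2).coeff (2 * m) * (t.map q.coeff).prod -
      ∑ x ∈ (Finset.HasAntidiagonal.antidiagonal (2 * m)).erase (m, m),
        ((x.1 ::ₘ x.2 ::ₘ t).map q.coeff).prod := by
  simp only [Multiset.map_cons, Multiset.prod_cons, ← mul_assoc]
  rw [coeff_mul_coeff_self, sub_mul, Finset.sum_mul]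

theorem prod_map_coeff_mem_squarefreeCoeffSpan {q : S[X]}
    (hq : ∀ m, (q ^ 2).coeff (2 * m) ∈ (algebraMap R S).range) (t : Multiset ℕ) :
    (t.map q.coeff).prod ∈ squarefreeCoeffSpan R q := by
  induction t using (measure (indexWeight q.natDegree)).wf.induction with | _ t ih
  by_cases ht : t.Nodup
  · exact prod_map_coeff_mem_squarefreeCoeffSpan_of_nodup q ht
  obtain ⟨m, hm⟩ : ∃ m, m ::ₘ m ::ₘ 0 ≤ t := by
    simpa only [Multiset.nodup_iff_le, not_forall, not_not] using ht
  obtain ⟨u, rfl⟩ := Multiset.le_iff_exists_add.mp hm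
  simp only [Multiset.cons_add, zero_add] at ih ⊢
  obtain ⟨r, hr⟩ := hq m
  rw [prod_map_coeff_cons_cons_self, ← hr, ← Algebra.smul_def]
  refine sub_mem (Submodule.smul_mem _ r (ih u (indexWeight_lt_cons_cons _ m m u)))
    (sum_mem ?_)
  rintro ⟨a, b⟩ hx
  obtain ⟨hne, hab⟩ := Finset.mem_erase.mp hx
  rw [Finset.HasAntidiagonal.mem_antidiagonal] at hab
  by_cases hbound : a ≤ q.natDegree ∧ b ≤ q.natDegree
  · have ham : a ≠ m := by
      rintro rfl
      exact hne (Prod.ext rfl (by lia))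
    exact ih _ (indexWeight_spread_lt hbound.1 hbound.2 hab ham u)
  · have hzero : q.coeff a * q.coeff b = 0 := by
      rcases not_and_or.mp hbound with ha | hb
      · rw [coeff_eq_zero_of_natDegree_lt (not_le.mp ha), zero_mul]
      · rw [coeff_eq_zero_of_natDegree_lt (not_le.mp hb), mul_zero]
    simp only [Multiset.map_cons, Multiset.prod_cons, ← mul_assoc, hzero, zero_mul, zero_mem]

theorem adjoin_range_coeff_eq_squarefreeCoeffSpan {q : S[X]}
    (hq : ∀ m, (q ^ 2).coeff (2 * m) ∈ (algebraMap R S).range) :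
    (Algebra.adjoin R (Set.range q.coeff)).toSubmodule = squarefreeCoeffSpan R q := by
  refine le_antisymm ?_ (squarefreeCoeffSpan_le_adjoin q)
  rw [Algebra.adjoin_eq_span, Submodule.span_le]
  intro x hx
  obtain ⟨l, hl, rfl⟩ := Submonoid.exists_multiset_of_mem_closure hx
  choose! index hindex using hl
  have hmem := prod_map_coeff_mem_squarefreeCoeffSpan hq (l.map index)
  rwa [Multiset.map_map, Function.comp_def, Multiset.map_congr rfl hindex, Multiset.map_id'] at hmem

theorem isIntegral_coeff_of_sq_coeff_two_mul {q : S[X]}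
    (hq : ∀ m, IsIntegral R ((q ^ 2).coeff (2 * m))) (i : ℕ) : IsIntegral R (q.coeff i) := by
  have hq' : ∀ m, (q ^ 2).coeff (2 * m) ∈ (algebraMap (integralClosure R S) S).range :=
    fun m ↦ ⟨⟨_, hq m⟩, rfl⟩
  have hfg : (Algebra.adjoin (integralClosure R S) (Set.range q.coeff)).toSubmodule.FG :=
    adjoin_range_coeff_eq_squarefreeCoeffSpan hq' ▸ squarefreeCoeffSpan_fg q
  exact isIntegral_trans (R := R) (A := integralClosure R S) _
    (IsIntegral.of_mem_of_fg _ hfg _ (Algebra.subset_adjoin ⟨i, rfl⟩))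

end Span

theorem stmt17_general {R S : Type*} [CommRing R] [CommRing S] (φ : R →+* S) (F : R[X])
    (q ρ : S[X]) (hdec : F.map φ = q ^ 2 + ρ) (hodd : ∀ i : ℕ, Even i → ρ.coeff i = 0) :
    (∀ i, φ.IsIntegralElem (q.coeff i)) ∧ (∀ i, φ.IsIntegralElem (ρ.coeff i)) := by
  let := φ.toAlgebra
  have hcoeff (i : ℕ) : φ (F.coeff i) = (q ^ 2).coeff i + ρ.coeff i := by
    rw [← coeff_map, hdec, coeff_add]
  have hF (i : ℕ) : IsIntegral R (φ (F.coeff i)) := isIntegral_algebraMap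
  have hq : ∀ i, IsIntegral R (q.coeff i) := by
    refine isIntegral_coeff_of_sq_coeff_two_mul fun m ↦ ?_
    simpa only [hcoeff, hodd _ (even_two_mul m), add_zero] using hF (2 * m)
  have hρ (i : ℕ) : IsIntegral R (ρ.coeff i) := by
    rw [← add_sub_cancel_left ((q ^ 2).coeff i) (ρ.coeff i), ← hcoeff, pow_two, coeff_mul]
    exact (hF i).sub (IsIntegral.sum _ fun x _ ↦ (hq x.1).mul (hq x.2))
  exact ⟨hq, hρ⟩

/-- Let `K` be a field of characteristic `≠ 2`, `f ∈ K[x]`, and `Ω` an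
algebraic closure of the rational function field `K(T)`.  If `q, ρ ∈ Ω[z]` give a totally
odd part-square decomposition `f(z + T) = q² + ρ` (with `deg q ≤ ⌈deg f(z+T)/2⌉` and every
nonzero term of `ρ` of odd degree), then every coefficient of `q` and of `ρ` is integral
over the polynomial ring `K[T]` (whose image in `Ω` is via `φ`). -/
theorem stmt17 (K : Type*) [Field K] (hchar : (2 : K) ≠ 0)
    (Ω : Type*) [Field Ω] [Algebra (RatFunc K) Ω] [IsAlgClosure (RatFunc K) Ω]
    (φ : Polynomial K →+* Ω)
    (hφ : φ = (algebraMap (RatFunc K) Ω).comp (algebraMap (Polynomial K) (RatFunc K)))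
    (f : Polynomial K) (q ρ : Polynomial Ω)
    (hdec : (f.map (φ.comp Polynomial.C)).comp (X + C (φ Polynomial.X)) = q ^ 2 + ρ)
    (hdeg : 2 * q.natDegree ≤
      ((f.map (φ.comp Polynomial.C)).comp (X + C (φ Polynomial.X))).natDegree + 1)
    (hodd : ∀ i : ℕ, Even i → ρ.coeff i = 0) :
    (∀ i, φ.IsIntegralElem (q.coeff i)) ∧ (∀ i, φ.IsIntegralElem (ρ.coeff i)) := by
  refine stmt17_general φ ((f.map C).comp (X + C X)) q ρ ?_ hodd
  simpa [Polynomial.map_comp, Polynomial.map_map] using hdec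
end

section
/- Let K be a field of characteristic 0, K̄ an algebraic closure of K, and f ∈ K[x] a separable polynomial of degree ≥ 1. Fix a totally odd part-square decomposition f(z + T) = q_T(z)² + ρ_T(z) with q_T, ρ_T having coefficients in an algebraic closure of K(T) (such a decomposition exists), let R₁ be the coefficient of z in ρ_T, let L be a finite Galois extension of K(T) containing R₁, and set F(T) := ∏_{σ ∈ Gal(L/K(T))} σ(R₁). Then: (i) F is a nonzero element of the polynomial ring K[T]; and (ii) for every root α ∈ K̄ of F one has f(α) ≠ 0, and there exist q, ρ ∈ K̄[z] with f(z + α) = q² + ρ, deg q ≤ ⌈deg(f)/2⌉, every nonzero term of ρ of odd degree, and the coefficient of z in ρ equal to 0. -/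
open Polynomial

set_option synthInstance.maxHeartbeats 400000
set_option maxHeartbeats 800000

/-!
If a valuation is at most `1` on the even coefficients of `q ^ 2`, it is at most `1` on all
coefficients of `q`: consider the coefficient of degree `2 m` of `q ^ 2`, where `m` is the last
index at which the Gauss norm of `q` is attained. As an integral closure is an intersection of
valuation rings, the coefficients of `q_T`, hence of `ρ_T`, are integral over `K[T]`, and so
`F = N(R₁)` lies in `K[T]`. If `F(α) = 0`, some homomorphism from the integral closure of `K[T]`
to `K̄` extends `T ↦ α` and kills `R₁`; it carries the decomposition of `f(z + T)` to one of
`f(z + α)` without linear term in the remainder. The latter gives `f(α) = q(0)²` and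
`f'(α) = 2 q(0) q'(0)`, so `f(α) = 0` would make `α` a double root of `f`. In particular `F ≠ 0`,
since otherwise the roots of `f` would be among those of `F`.
-/

/-- The index `m` is the last one at which the Gauss norm of the polynomial `q` with respect to
the valuation `v` is attained; such indices make Gauss's lemma explicit on one coefficient. -/
structure IsLastMaxIndex {R Γ₀ : Type*} [CommRing R] [LinearOrderedCommGroupWithZero Γ₀]
    (v : Valuation R Γ₀) (q : R[X]) (m : ℕ) : Prop where
  le : ∀ j, v (q.coeff j) ≤ v (q.coeff m)
  lt : ∀ j, m < j → v (q.coeff j) < v (q.coeff m)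

section Valuation

variable {R Γ₀ : Type*} [CommRing R] [LinearOrderedCommGroupWithZero Γ₀] (v : Valuation R Γ₀)

theorem exists_isLastMaxIndex {q : R[X]} {i : ℕ} (hi : v (q.coeff i) ≠ 0) :
    ∃ m, IsLastMaxIndex v q m := by
  have hi' : i ∈ q.support := mem_support_iff.2 fun h => hi (by rw [h, map_zero])
  obtain ⟨m, -, hm⟩ := q.support.exists_max_image
    (fun j => toLex (v (q.coeff j), j)) ⟨i, hi'⟩
  simp only [Prod.Lex.toLex_le_toLex] at hm
  have hm_pos : 0 < v (q.coeff m) :=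
    (zero_lt_iff.2 hi).trans_le ((hm i hi').elim le_of_lt fun h => h.1.le)
  refine ⟨m, fun j => ?_, fun j hj => ?_⟩ <;> by_cases hj0 : q.coeff j = 0
  · simp [hj0]
  · exact (hm j (mem_support_iff.2 hj0)).elim le_of_lt fun h => h.1.le
  · simpa [hj0] using hm_pos
  · exact (hm j (mem_support_iff.2 hj0)).resolve_right fun h => hj.not_ge h.2

variable {v}

theorem IsLastMaxIndex.pos {q : R[X]} {m : ℕ} (hm : IsLastMaxIndex v q m) : 0 < v (q.coeff m) :=
  zero_le.trans_lt (hm.lt (m + 1) m.lt_succ_self)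

theorem IsLastMaxIndex.valuation_coeff_mul {p q : R[X]} {m n : ℕ}
    (hm : IsLastMaxIndex v p m) (hn : IsLastMaxIndex v q n) :
    v ((p * q).coeff (m + n)) = v (p.coeff m) * v (q.coeff n) := by
  have hrest : v (∑ x ∈ (Finset.HasAntidiagonal.antidiagonal (m + n)).erase (m, n),
      p.coeff x.1 * q.coeff x.2) < v (p.coeff m * q.coeff n) := by
    refine v.map_sum_lt' (by rw [map_mul]; exact mul_pos hm.pos hn.pos) ?_
    rintro ⟨a, b⟩ hab
    simp only [Finset.mem_erase, Finset.HasAntidiagonal.mem_antidiagonal, ne_eq,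
      Prod.mk.injEq] at hab
    rw [map_mul, map_mul]
    rcases lt_or_ge m a with ha | ha
    · exact (mul_le_mul_right (hn.le b) _).trans_lt (mul_lt_mul_of_pos_right (hm.lt a ha) hn.pos)
    · exact (mul_le_mul_left (hm.le a) _).trans_lt
        (mul_lt_mul_of_pos_left (hn.lt b (by omega)) hm.pos)
  have hmem : (m, n) ∈ Finset.HasAntidiagonal.antidiagonal (m + n) :=
    Finset.HasAntidiagonal.mem_antidiagonal.2 rfl
  rw [coeff_mul, ← Finset.add_sum_erase _ _ hmem, v.map_add_eq_of_lt_left hrest, map_mul]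

theorem valuation_coeff_le_one_of_even_coeff_sq_le_one {q : R[X]}
    (h : ∀ i, Even i → v ((q ^ 2).coeff i) ≤ 1) (i : ℕ) : v (q.coeff i) ≤ 1 := by
  by_contra! hi
  obtain ⟨m, hm⟩ := exists_isLastMaxIndex v (zero_lt_one.trans hi).ne'
  have hm1 : 1 < v (q.coeff m) := hi.trans_le (hm.le i)
  have hsq : v ((q ^ 2).coeff (m + m)) = v (q.coeff m) * v (q.coeff m) := by
    rw [pow_two, hm.valuation_coeff_mul hm]
  exact (hsq ▸ h (m + m) (Even.add_self m)).not_gt (one_lt_mul'' hm1 hm1)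

end Valuation

theorem isIntegral_coeff_of_isIntegral_even_coeff_sq {A E : Type*} [CommRing A] [Field E]
    [Algebra A E] {q : E[X]} (h : ∀ i, Even i → IsIntegral A ((q ^ 2).coeff i)) (i : ℕ) :
    IsIntegral A (q.coeff i) := by
  by_contra hi
  have : IsIntegrallyClosedIn (integralClosure A E).toSubring E :=
    inferInstanceAs (IsIntegrallyClosedIn (integralClosure A E) E)
  obtain ⟨V, hV, hVi⟩ := Subring.exists_le_valuationSubring_of_isIntegrallyClosedIn
    (R := (integralClosure A E).toSubring) hi
  rw [← V.valuation_le_one_iff] at hVi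
  exact hVi (valuation_coeff_le_one_of_even_coeff_sq_le_one
    (fun j hj => (V.valuation_le_one_iff _).2 (hV (h j hj))) i)

/-- `h = q ^ 2 + ρ` is a totally odd part-square decomposition of `h`. The degree bound encodes
`deg q ≤ ⌈deg h / 2⌉`. -/
structure IsTotallyOddDecomposition {R : Type*} [CommRing R] (h q ρ : R[X]) : Prop where
  eq : h = q ^ 2 + ρ
  natDegree_le : 2 * q.natDegree ≤ h.natDegree + 1
  coeff_even : ∀ i, Even i → ρ.coeff i = 0

namespace IsTotallyOddDecomposition

section CommRing

variable {R S : Type*} [CommRing R] [CommRing S]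

theorem map {h q ρ : R[X]} (hd : IsTotallyOddDecomposition h q ρ) (g : R →+* S)
    (hdeg : (h.map g).natDegree = h.natDegree) :
    IsTotallyOddDecomposition (h.map g) (q.map g) (ρ.map g) where
  eq := by rw [hd.eq, Polynomial.map_add, Polynomial.map_pow]
  natDegree_le := by
    rw [hdeg]
    exact (Nat.mul_le_mul_left 2 natDegree_map_le).trans hd.natDegree_le
  coeff_even i hi := by rw [coeff_map, hd.coeff_even i hi, map_zero]

theorem eval_derivative_eq_zero [IsReduced R] {f q ρ : R[X]} {a : R}
    (hd : IsTotallyOddDecomposition (taylor a f) q ρ) (hρ : ρ.coeff 1 = 0) (ha : f.eval a = 0) :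
    f.derivative.eval a = 0 := by
  have hq : q.coeff 0 = 0 := by
    have h0 := congrArg (coeff · 0) hd.eq
    simp only [taylor_coeff_zero, ha, coeff_add, hd.coeff_even 0 Even.zero, add_zero, pow_two,
      mul_coeff_zero] at h0
    exact eq_zero_of_pow_eq_zero (n := 2) (by rw [pow_two, ← h0])
  rw [← taylor_coeff_one, hd.eq, coeff_add, hρ, add_zero, pow_two, mul_coeff_one, hq, zero_mul,
    mul_zero, add_zero]

end CommRing

section Integral

variable {A E : Type*} [CommRing A] [Field E] [Algebra A E]

theorem exists_lift [IsIntegrallyClosedIn A E] {h : A[X]} {q ρ : E[X]}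
    (hd : IsTotallyOddDecomposition (h.map (algebraMap A E)) q ρ) :
    ∃ q₀ ρ₀ : A[X], IsTotallyOddDecomposition h q₀ ρ₀ ∧
      q₀.map (algebraMap A E) = q ∧ ρ₀.map (algebraMap A E) = ρ := by
  have hinj : Function.Injective (algebraMap A E) :=
    IsIntegralClosure.algebraMap_injective A A E
  have hsq : ∀ i, Even i → IsIntegral A ((q ^ 2).coeff i) := fun i hi => by
    have : (q ^ 2).coeff i = algebraMap A E (h.coeff i) := by
      rw [← coeff_map, hd.eq, coeff_add, hd.coeff_even i hi, add_zero]
    exact this ▸ isIntegral_algebraMap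
  obtain ⟨q₀, rfl⟩ : ∃ q₀ : A[X], q₀.map (algebraMap A E) = q :=
    (lifts_iff_coeff_lifts q).2 fun i => IsIntegrallyClosedIn.isIntegral_iff.1
      (isIntegral_coeff_of_isIntegral_even_coeff_sq hsq i)
  have hρ : (h - q₀ ^ 2).map (algebraMap A E) = ρ := by
    rw [Polynomial.map_sub, hd.eq, Polynomial.map_pow, add_sub_cancel_left]
  refine ⟨q₀, h - q₀ ^ 2, ⟨(add_sub_cancel _ _).symm, ?_, fun i hi => hinj ?_⟩, rfl, hρ⟩
  · simpa only [natDegree_map_eq_of_injective hinj] using hd.natDegree_le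
  · rw [← coeff_map, hρ, hd.coeff_even i hi, map_zero]

theorem exists_lift_integralClosure {h : A[X]} {q ρ : E[X]}
    (hd : IsTotallyOddDecomposition (h.map (algebraMap A E)) q ρ) :
    ∃ q₀ ρ₀ : (integralClosure A E)[X],
      IsTotallyOddDecomposition (h.map (algebraMap A (integralClosure A E))) q₀ ρ₀ ∧
      ∀ i, (ρ₀.coeff i : E) = ρ.coeff i := by
  rw [IsScalarTower.algebraMap_eq A (integralClosure A E) E, ← Polynomial.map_map] at hd
  obtain ⟨q₀, ρ₀, hd₀, -, rfl⟩ := hd.exists_lift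
  exact ⟨q₀, ρ₀, hd₀, fun i => (coeff_map (algebraMap (integralClosure A E) E) i).symm⟩

theorem isIntegral_coeff {h : A[X]} {q ρ : E[X]}
    (hd : IsTotallyOddDecomposition (h.map (algebraMap A E)) q ρ) (i : ℕ) :
    IsIntegral A (ρ.coeff i) := by
  obtain ⟨-, ρ₀, -, hρ₀⟩ := hd.exists_lift_integralClosure
  exact hρ₀ i ▸ (ρ₀.coeff i).2

end Integral

end IsTotallyOddDecomposition

theorem exists_algHom_forall_mem_eq_zero {A B M : Type*} [CommRing A] [CommRing B] [Algebra A B]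
    [Algebra.IsIntegral A B] [Field M] [IsAlgClosed M] [Algebra A M] (I : Ideal B)
    (hI : I.comap (algebraMap A B) ≤ RingHom.ker (algebraMap A M)) :
    ∃ ψ : B →ₐ[A] M, ∀ b ∈ I, ψ b = 0 := by
  set p := RingHom.ker (algebraMap A M)
  have : p.IsPrime := RingHom.ker_isPrime _
  obtain ⟨Q, hIQ, hQ, hQp⟩ := Ideal.exists_ideal_over_prime_of_isIntegral p I hI
  have : Q.LiesOver p := ⟨hQp.symm⟩
  let : Algebra (A ⧸ p) M := (RingHom.kerLift (algebraMap A M)).toAlgebra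
  have : IsScalarTower A (A ⧸ p) M := IsScalarTower.of_algebraMap_eq fun _ => rfl
  have : Module.IsTorsionFree (A ⧸ p) M :=
    Module.isTorsionFree_iff_algebraMap_injective.2 (RingHom.kerLift_injective _)
  let l : (B ⧸ Q) →ₐ[A ⧸ p] M := IsAlgClosed.lift
  refine ⟨(l.restrictScalars A).comp (Ideal.Quotient.mkₐ A Q), fun b hb => ?_⟩
  simp [Ideal.Quotient.eq_zero_iff_mem.2 (hIQ hb)]

section Norm

variable {A F L E M : Type*} [CommRing A] [IsIntegrallyClosed A]
  [Field F] [Algebra A F] [IsFractionRing A F]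
  [Field L] [Algebra F L] [Algebra A L] [IsScalarTower A F L]

theorem exists_algebraMap_eq_norm {r : L} (hr : IsIntegral A r) :
    ∃ P : A, algebraMap A F P = Algebra.norm F r :=
  IsIntegrallyClosed.isIntegral_iff.1 (Algebra.isIntegral_norm F hr)

theorem dvd_pow_finrank_of_algebraMap_eq_norm {P a : A} {r c : L}
    (hP : algebraMap A F P = Algebra.norm F r) (hc : IsIntegral A c)
    (ha : algebraMap A L a = r * c) : P ∣ a ^ Module.finrank F L := by
  obtain ⟨N, hN⟩ := exists_algebraMap_eq_norm (F := F) hc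
  refine ⟨N, IsFractionRing.injective A F ?_⟩
  rw [map_pow, map_mul, hP, hN, ← map_mul, ← ha, IsScalarTower.algebraMap_apply A F L,
    Algebra.norm_algebraMap]

variable [Field E] [Algebra L E] [Algebra A E] [IsScalarTower A L E]
  [Field M] [IsAlgClosed M] [Algebra A M]

-- If `a = r c` with `c` integral, then `a ^ n` is a multiple of `N(r)`; so the ideal generated
-- by `r` meets `A` inside every prime containing `N(r)`, and such a prime lifts to one over `r`.
theorem exists_algHom_apply_eq_zero_of_norm {P : A} {r : L} {s : integralClosure A E}
    (hs : (s : E) = algebraMap L E r) (hP : algebraMap A F P = Algebra.norm F r)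
    (hPM : algebraMap A M P = 0) :
    ∃ ψ : integralClosure A E →ₐ[A] M, ψ s = 0 := by
  suffices hker : (Ideal.span {s}).comap (algebraMap A (integralClosure A E)) ≤
      RingHom.ker (algebraMap A M) by
    obtain ⟨ψ, hψ⟩ := exists_algHom_forall_mem_eq_zero (Ideal.span {s}) hker
    exact ⟨ψ, hψ s (Ideal.mem_span_singleton_self s)⟩
  intro a ha
  obtain ⟨c, hc⟩ := Ideal.mem_span_singleton.1 (Ideal.mem_comap.1 ha)
  have hac : algebraMap L E (algebraMap A L a) = algebraMap L E r * c := by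
    rw [← IsScalarTower.algebraMap_apply, ← hs]
    exact congrArg Subtype.val hc
  obtain ⟨c', hc', hac'⟩ : ∃ c' : L, IsIntegral A c' ∧ algebraMap A L a = r * c' := by
    rcases eq_or_ne r 0 with rfl | hr
    · exact ⟨0, isIntegral_zero, (algebraMap L E).injective (by simpa using hac)⟩
    · refine ⟨algebraMap A L a / r, ?_, (mul_div_cancel₀ _ hr).symm⟩
      have hr' : algebraMap L E r ≠ 0 := (_root_.map_ne_zero _).2 hr
      rw [← isIntegral_algebraMap_iff (algebraMap L E).injective, map_div₀, hac,
        mul_div_cancel_left₀ _ hr']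
      exact c.2
  have hdvd := map_dvd (algebraMap A M) (dvd_pow_finrank_of_algebraMap_eq_norm hP hc' hac')
  rw [hPM, zero_dvd_iff, map_pow] at hdvd
  exact eq_zero_of_pow_eq_zero hdvd

theorem IsTotallyOddDecomposition.exists_map_of_norm_eq_zero {h : A[X]} {q ρ : E[X]}
    (hd : IsTotallyOddDecomposition (h.map (algebraMap A E)) q ρ) {k : ℕ} {r : L}
    (hr : algebraMap L E r = ρ.coeff k) {P : A} (hP : algebraMap A F P = Algebra.norm F r)
    (hPM : algebraMap A M P = 0) (hdeg : (h.map (algebraMap A M)).natDegree = h.natDegree) :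
    ∃ q' ρ' : M[X], IsTotallyOddDecomposition (h.map (algebraMap A M)) q' ρ' ∧
      ρ'.coeff k = 0 := by
  obtain ⟨q₀, ρ₀, hd₀, hρ₀⟩ := hd.exists_lift_integralClosure
  obtain ⟨ψ, hψ⟩ := exists_algHom_apply_eq_zero_of_norm (s := ρ₀.coeff k)
    ((hρ₀ k).trans hr.symm) hP hPM
  have hmap : (h.map (algebraMap A (integralClosure A E))).map (ψ : _ →+* M) =
      h.map (algebraMap A M) := by
    rw [Polynomial.map_map, ψ.comp_algebraMap]
  refine ⟨q₀.map ψ, ρ₀.map ψ, hmap ▸ hd₀.map (ψ : _ →+* M) ?_, by rwa [coeff_map]⟩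
  rw [hmap, hdeg]
  refine le_antisymm ?_ natDegree_map_le
  rw [← hdeg, ← hmap]
  exact natDegree_map_le

end Norm

section Translate

variable {K : Type*}

/-- The polynomial `f (z + T)` in the variable `z` over `K[T]`; the substitution `T ↦ α` turns it
into `f (z + α)`. Both `z` and `T` are written `X`. -/
noncomputable def genericTranslate [CommRing K] (f : K[X]) : K[X][X] :=
  taylor X (f.map C)

theorem natDegree_genericTranslate [CommRing K] (f : K[X]) :
    (genericTranslate f).natDegree = f.natDegree := by
  rw [genericTranslate, natDegree_taylor, natDegree_map_eq_of_injective C_injective]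

theorem map_genericTranslate {S : Type*} [CommRing K] [CommRing S] (f : K[X]) (g : K[X] →+* S) :
    (genericTranslate f).map g = taylor (g X) (f.map (g.comp C)) := by
  rw [genericTranslate, map_taylor, Polynomial.map_map]

theorem exists_decomposition_of_aeval_norm_eq_zero {F L E M : Type*} [Field K]
    [Field F] [Algebra K[X] F] [IsFractionRing K[X] F]
    [Field L] [Algebra F L] [Algebra K[X] L] [IsScalarTower K[X] F L]
    [Field E] [Algebra L E] [Algebra K[X] E] [IsScalarTower K[X] L E]
    [Field M] [IsAlgClosed M] [Algebra K M] {f : K[X]} (hsep : f.Separable) {q ρ : Polynomial E}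
    (hd : IsTotallyOddDecomposition ((genericTranslate f).map (algebraMap K[X] E)) q ρ) {r : L}
    (hr : algebraMap L E r = ρ.coeff 1) {P : K[X]}
    (hP : algebraMap K[X] F P = Algebra.norm F r) {α : M} (hα : aeval α P = 0) :
    aeval α f ≠ 0 ∧ ∃ q' ρ' : M[X],
      IsTotallyOddDecomposition (taylor α (f.map (algebraMap K M))) q' ρ' ∧ ρ'.coeff 1 = 0 := by
  let : Algebra K[X] M := (aeval α : K[X] →ₐ[K] M).toAlgebra
  have hmap : (genericTranslate f).map (algebraMap K[X] M) = taylor α (f.map (algebraMap K M)) := by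
    have hX : algebraMap K[X] M X = α := aeval_X α
    have hC : (algebraMap K[X] M).comp C = algebraMap K M := RingHom.ext (aeval_C α)
    rw [map_genericTranslate, hX, hC]
  obtain ⟨q', ρ', hd', hρ'⟩ := hd.exists_map_of_norm_eq_zero hr hP (M := M) hα
    (by rw [hmap, natDegree_taylor, natDegree_map, natDegree_genericTranslate])
  rw [hmap] at hd'
  refine ⟨fun hf => hsep.aeval_derivative_ne_zero hf ?_, q', ρ', hd', hρ'⟩
  rw [← eval_map_algebraMap] at hf ⊢
  rw [← derivative_map]
  exact hd'.eval_derivative_eq_zero hρ' hf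

end Translate

theorem stmt18_general (K : Type*) [Field K] (M : Type*) [Field M] [Algebra K M] [IsAlgClosed M]
    (f : K[X]) (hsep : f.Separable) (hdeg : 1 ≤ f.natDegree)
    (E : Type*) [Field E] [Algebra (RatFunc K) E]
    (φ : K[X] →+* E) (hφ : φ = (algebraMap (RatFunc K) E).comp (algebraMap K[X] (RatFunc K)))
    (qT ρT : Polynomial E)
    (hd : IsTotallyOddDecomposition (taylor (φ X) (f.map (φ.comp C))) qT ρT)
    (L : IntermediateField (RatFunc K) E) [FiniteDimensional (RatFunc K) L]
    (hR₁ : ρT.coeff 1 ∈ L) :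
    ∃ P : K[X], P ≠ 0 ∧
      φ P = algebraMap (RatFunc K) E (Algebra.norm (RatFunc K) (⟨ρT.coeff 1, hR₁⟩ : L)) ∧
      ∀ α : M, aeval α P = 0 → aeval α f ≠ 0 ∧ ∃ q ρ : M[X],
        IsTotallyOddDecomposition (taylor α (f.map (algebraMap K M))) q ρ ∧ ρ.coeff 1 = 0 := by
  let : Algebra K[X] E := φ.toAlgebra
  have : IsScalarTower K[X] (RatFunc K) E := IsScalarTower.of_algebraMap_eq' hφ
  have : IsScalarTower K[X] L E := IsScalarTower.of_algebraMap_eq fun _ => rfl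
  have hdT : IsTotallyOddDecomposition ((genericTranslate f).map (algebraMap K[X] E)) qT ρT := by
    rwa [map_genericTranslate]
  have hR₁_int : IsIntegral K[X] (⟨ρT.coeff 1, hR₁⟩ : L) :=
    (isIntegral_algebraMap_iff (algebraMap L E).injective).1 (hdT.isIntegral_coeff 1)
  obtain ⟨P, hP⟩ := exists_algebraMap_eq_norm (F := RatFunc K) hR₁_int
  have hroot := fun (α : M) (hα : aeval α P = 0) =>
    exists_decomposition_of_aeval_norm_eq_zero hsep hdT rfl hP hα
  refine ⟨P, ?_, by rw [hφ, ← hP, RingHom.comp_apply], hroot⟩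
  rintro rfl
  obtain ⟨α, hα⟩ := IsAlgClosed.exists_aeval_eq_zero M f (natDegree_pos_iff_degree_pos.1 hdeg).ne'
  exact (hroot α (map_zero _)).1 hα

/-- Let `K` have characteristic `0`, `K̄` an algebraic closure of `K`,
and `f ∈ K[x]` separable of degree `≥ 1`.  Fix a totally odd part-square decomposition
`f(z + T) = q_T² + ρ_T` over an algebraic closure `Ω` of `K(T)`, let `R₁` be the
coefficient of `z` in `ρ_T`, `L` a finite Galois extension of `K(T)` (inside `Ω`)
containing `R₁`, and `F := ∏_{σ ∈ Gal(L/K(T))} σ R₁`.  Then `F` is (the image of) a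
nonzero polynomial `P ∈ K[T]`, and every root `α ∈ K̄` of `P` satisfies `f(α) ≠ 0` and
admits a totally odd part-square decomposition of `f(z + α)` with vanishing linear
term of the remainder. -/
theorem stmt18 (K : Type*) [Field K] [CharZero K]
    (Kbar : Type*) [Field Kbar] [Algebra K Kbar] [IsAlgClosure K Kbar]
    (f : Polynomial K) (hsep : f.Separable) (hdeg : 1 ≤ f.natDegree)
    (Ω : Type*) [Field Ω] [Algebra (RatFunc K) Ω] [IsAlgClosure (RatFunc K) Ω]
    (φ : Polynomial K →+* Ω)
    (hφ : φ = (algebraMap (RatFunc K) Ω).comp (algebraMap (Polynomial K) (RatFunc K)))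
    (qT ρT : Polynomial Ω)
    (hdec : (f.map (φ.comp Polynomial.C)).comp (X + C (φ Polynomial.X)) = qT ^ 2 + ρT)
    (hdegq : 2 * qT.natDegree ≤
      ((f.map (φ.comp Polynomial.C)).comp (X + C (φ Polynomial.X))).natDegree + 1)
    (hodd : ∀ i : ℕ, Even i → ρT.coeff i = 0)
    (L : IntermediateField (RatFunc K) Ω)
    [FiniteDimensional (RatFunc K) L] [IsGalois (RatFunc K) L]
    (hR₁ : ρT.coeff 1 ∈ L) :
    ∃ P : Polynomial K, P ≠ 0 ∧
      φ P = (((∏ᶠ σ : L ≃ₐ[RatFunc K] L, σ (⟨ρT.coeff 1, hR₁⟩ : L)) : L) : Ω) ∧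
      ∀ α : Kbar, Polynomial.aeval α P = 0 →
        Polynomial.aeval α f ≠ 0 ∧
        ∃ q ρ : Polynomial Kbar,
          (f.map (algebraMap K Kbar)).comp (X + C α) = q ^ 2 + ρ ∧
          2 * q.natDegree ≤ ((f.map (algebraMap K Kbar)).comp (X + C α)).natDegree + 1 ∧
          (∀ i : ℕ, Even i → ρ.coeff i = 0) ∧
          ρ.coeff 1 = 0 := by
  have : IsAlgClosed Kbar := IsAlgClosure.isAlgClosed K
  rw [finprod_eq_prod_of_fintype, ← Algebra.norm_eq_prod_automorphisms]
  obtain ⟨P, hP0, hP, hroot⟩ :=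
    stmt18_general K Kbar f hsep hdeg Ω φ hφ qT ρT ⟨hdec, hdegq, hodd⟩ L hR₁
  exact ⟨P, hP0, hP, fun α hα => (hroot α hα).imp_right fun ⟨q, ρ, hd, hρ⟩ =>
    ⟨q, ρ, hd.eq, hd.natDegree_le, hd.coeff_even, hρ⟩⟩
end
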